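/- Let W be a discrete memoryless channel with R_cr < C and let R ∈ (R_cr, C). If W is singular at rate R (i.e., for every Q with E_r(R,Q) = E_r(R), the pair (Q,W) is singular), then there exists a constant K₃ > 0, depending only on W and R, such that for every positive integer N there exists an (N,R) code (f,φ) with maximal error probability P_e(f,φ) ≤ (K₃/√N) · e^{−N·E_r(R)}. -/

import Mathlib

open Real BigOperators
open scoped Classical

namespace RCB

/-- A probability distribution on a finite alphabet. -/
def IsDist {α : Type*} [Fintype α] (Q : α → ℝ) : Prop :=
  (∀ a, 0 ≤ Q a) ∧ ∑ a, Q a = 1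

/-- A discrete memoryless channel, i.e. a stochastic matrix from `X` to `Y`. -/
def IsChannel {X Y : Type*} [Fintype X] [Fintype Y] (W : X → Y → ℝ) : Prop :=
  (∀ x y, 0 ≤ W x y) ∧ ∀ x, ∑ y, W x y = 1

/-- The Gallager function `E_o(ρ, Q)`. -/
noncomputable def Eo {X Y : Type*} [Fintype X] [Fintype Y]
    (W : X → Y → ℝ) (ρ : ℝ) (Q : X → ℝ) : ℝ :=
  - Real.log (∑ y, (∑ x, Q x * W x y ^ (1 / (1 + ρ))) ^ (1 + ρ))

/-- The random coding exponent `E_r(R, Q)` for input distribution `Q`. -/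
noncomputable def ErQ {X Y : Type*} [Fintype X] [Fintype Y]
    (W : X → Y → ℝ) (R : ℝ) (Q : X → ℝ) : ℝ :=
  sSup ((fun ρ => -ρ * R + Eo W ρ Q) '' Set.Icc (0 : ℝ) 1)

/-- The random coding exponent `E_r(R)`. -/
noncomputable def Er {X Y : Type*} [Fintype X] [Fintype Y]
    (W : X → Y → ℝ) (R : ℝ) : ℝ :=
  sSup {v : ℝ | ∃ Q : X → ℝ, IsDist Q ∧ v = ErQ W R Q}

/-- The mutual information `I(Q; W)` (natural logarithm). -/
noncomputable def MI {X Y : Type*} [Fintype X] [Fintype Y]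
    (W : X → Y → ℝ) (Q : X → ℝ) : ℝ :=
  ∑ x, ∑ y, Q x * W x y * Real.log (W x y / ∑ x', Q x' * W x' y)

/-- The capacity `C = max_Q I(Q;W)`. -/
noncomputable def Capacity {X Y : Type*} [Fintype X] [Fintype Y]
    (W : X → Y → ℝ) : ℝ :=
  sSup {v : ℝ | ∃ Q : X → ℝ, IsDist Q ∧ v = MI W Q}

/-- The critical rate of the input distribution `Q`:
`R_cr(Q) = ∂E_o(ρ,Q)/∂ρ |_{ρ=1}`. -/
noncomputable def RcrQ {X Y : Type*} [Fintype X] [Fintype Y]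
    (W : X → Y → ℝ) (Q : X → ℝ) : ℝ :=
  deriv (fun ρ => Eo W ρ Q) 1

/-- The critical rate of the channel: the largest `R` with
`E_r(R) = -R + max_Q E_o(1,Q)`. -/
noncomputable def Rcr {X Y : Type*} [Fintype X] [Fintype Y]
    (W : X → Y → ℝ) : ℝ :=
  sSup {R : ℝ | Er W R = -R + sSup {v : ℝ | ∃ Q : X → ℝ, IsDist Q ∧ v = Eo W 1 Q}}

/-- The rate `R_∞ = inf {R ≥ 0 : E_SP(R) < ∞}` (finiteness of the
sphere-packing exponent expressed as boundedness of the family of affine maps). -/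
noncomputable def Rinf {X Y : Type*} [Fintype X] [Fintype Y]
    (W : X → Y → ℝ) : ℝ :=
  sInf {R : ℝ | 0 ≤ R ∧
    BddAbove {v : ℝ | ∃ (Q : X → ℝ) (ρ : ℝ), IsDist Q ∧ 0 ≤ ρ ∧ v = -ρ * R + Eo W ρ Q}}

/-- The pair `(Q, W)` is singular if `W(y|x) = W(y|z)` whenever
`Q(x)W(y|x)Q(z)W(y|z) > 0`. -/
def Singular {X Y : Type*} (W : X → Y → ℝ) (Q : X → ℝ) : Prop :=
  ∀ x y z, 0 < Q x * W x y * (Q z * W z y) → W x y = W z y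

/-- `ρ^*_R(Q) = -∂E_r(a,Q)/∂a |_{a=R}`. -/
noncomputable def rhoStarQ {X Y : Type*} [Fintype X] [Fintype Y]
    (W : X → Y → ℝ) (Q : X → ℝ) (R : ℝ) : ℝ :=
  - deriv (fun a => ErQ W a Q) R

/-- The number of messages of an `(N, R)` code: `⌈exp (N R)⌉`. -/
noncomputable def nMsgs (N : ℕ) (R : ℝ) : ℕ := ⌈Real.exp (N * R)⌉₊

/-- The `N`-fold memoryless extension of the channel `W`. -/
noncomputable def Wn {X Y : Type*} (W : X → Y → ℝ) {N : ℕ}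
    (c : Fin N → X) (y : Fin N → Y) : ℝ :=
  ∏ n, W (c n) (y n)

/-- The maximal error probability of the code `(f, φ)` over the `N`-fold
memoryless extension of `W`. -/
noncomputable def Pmax {X Y : Type*} [Fintype X] [Fintype Y] {M N : ℕ}
    (W : X → Y → ℝ) (f : Fin M → Fin N → X) (φ : (Fin N → Y) → Fin M) : ℝ :=
  ⨆ m : Fin M, ∑ y : Fin N → Y, Wn W (f m) y * (if φ y ≠ m then (1 : ℝ) else 0)

/-- The ensemble average error probability `P̄_e(Q, N, R)`: the `⌈exp (N R)⌉`
codewords are drawn i.i.d. from `Q^N` and decoded by maximum-likelihood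
decoding, ties counted as errors. -/
noncomputable def Pbar {X Y : Type*} [Fintype X] [Fintype Y]
    (W : X → Y → ℝ) (Q : X → ℝ) (N : ℕ) (R : ℝ) : ℝ :=
  ∑ c : Fin (nMsgs N R) → Fin N → X,
    (∏ m, ∏ n, Q (c m n)) *
      ((nMsgs N R : ℝ)⁻¹ *
        ∑ m, ∑ y : Fin N → Y,
          Wn W (c m) y *
            (if ∃ m', m' ≠ m ∧ Wn W (c m) y ≤ Wn W (c m') y then (1 : ℝ) else 0))

/-- The tilted output distribution `f_ρ`. -/
noncomputable def fRho {X Y : Type*} [Fintype X] [Fintype Y]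
    (W : X → Y → ℝ) (Q : X → ℝ) (ρ : ℝ) (y : Y) : ℝ :=
  (∑ x, Q x * W x y ^ (1 / (1 + ρ))) ^ (1 + ρ) /
    ∑ b, (∑ a, Q a * W a b ^ (1 / (1 + ρ))) ^ (1 + ρ)

/-- The cumulant generating function
`Λ_ρ(λ) = log E_{P_{X,Y}}[exp(λ log (f_ρ(Y)/W(Y|X)))]` with `P_{X,Y} = Q × W`. -/
noncomputable def Lam {X Y : Type*} [Fintype X] [Fintype Y]
    (W : X → Y → ℝ) (Q : X → ℝ) (ρ : ℝ) (t : ℝ) : ℝ :=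
  Real.log (∑ x, ∑ y, Q x * W x y * Real.exp (t * Real.log (fRho W Q ρ y / W x y)))

/-- `P_{X,Y,Z}(S̃_Q)` where `P_{X,Y,Z}(x,y,z) = Q(x)W(y|x)Q(z)` and
`S̃_Q = {(x,y,z) : Q(x)W(y|x)Q(z)W(y|z) > 0}`. -/
noncomputable def PStilde {X Y : Type*} [Fintype X] [Fintype Y]
    (W : X → Y → ℝ) (Q : X → ℝ) : ℝ :=
  ∑ x, ∑ y, ∑ z,
    if 0 < Q x * W x y * (Q z * W z y) then Q x * W x y * Q z else 0

/-- The bivariate cumulant generating function `Λ_{1,ρ}(v)` with respect to the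
conditional distribution `P̃_{X,Y,Z}` of `P_{X,Y,Z}` given `S̃_Q`. -/
noncomputable def Lam1 {X Y : Type*} [Fintype X] [Fintype Y]
    (W : X → Y → ℝ) (Q : X → ℝ) (ρ : ℝ) (v : ℝ × ℝ) : ℝ :=
  Real.log ((∑ x, ∑ y, ∑ z,
    if 0 < Q x * W x y * (Q z * W z y) then
      Q x * W x y * Q z *
        Real.exp (v.1 * Real.log (W x y / fRho W Q ρ y) +
          v.2 * Real.log (W z y / W x y))
    else 0) / PStilde W Q)

/-- The subdifferential of `f : ℝ → ℝ` at `R` (for convex `f`). -/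
def Subderiv (f : ℝ → ℝ) (R : ℝ) : Set ℝ :=
  {g : ℝ | ∀ x, f R + g * (x - R) ≤ f x}

/-- The tilted backward channel `P^ρ_{X|Y}`. -/
noncomputable def PXgY {X Y : Type*} [Fintype X]
    (W : X → Y → ℝ) (Q : X → ℝ) (ρ : ℝ) (x : X) (y : Y) : ℝ :=
  Q x * W x y ^ (1 / (1 + ρ)) / ∑ a, Q a * W a y ^ (1 / (1 + ρ))

/-- The tilted joint distribution `P^ρ_{X,Y}(x,y) = P^ρ_{X|Y}(x|y) P^ρ_Y(y)`. -/
noncomputable def PXY {X Y : Type*} [Fintype X] [Fintype Y]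
    (W : X → Y → ℝ) (Q : X → ℝ) (ρ : ℝ) (x : X) (y : Y) : ℝ :=
  PXgY W Q ρ x y * fRho W Q ρ y

/-!
If `(Q, W)` is singular, then `W · y` takes at most one positive value on the support of `Q`, so
with `p` the output distribution and `q y` the `Q`-mass of the inputs compatible with `y` the
Gallager function becomes `Eo W ρ Q = -log ∑ y, p y * q y ^ ρ`.

For such a channel it suffices to decode by testing compatibility. Choosing codewords greedily gives
`⌈exp (N * R)⌉` codewords whose maximal error probability is at most a constant times the sum of
`p^N y * min 1 (exp (N * R) * q^N y)` over output words `y`. Bounding the minimum by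
`(exp (N * R) * q^N y) ^ ρ` with the optimal `ρ` yields `exp (-N * Er W R)`. If moreover
`0 < ρ < 1`, this bound is lossy unless the sum of the `log (q (y n))` lies within `O(1)` of
`-N * R`. As soon as `q` is not constant, under the tilted law proportional to `p y * q y ^ ρ` that
sum spreads over a range of order `√N`, and this saves the factor `1 / √N`.

The condition `R < Capacity W` makes the exponent positive, hence `ρ > 0`, while `Rcr W < R` forces
`ρ < 1`. An optimal `ρ` strictly between `0` and `1` in turn rules out a constant `q`.
-/

section Binomial

lemma centralBinom_sq_mul_le (n : ℕ) : n.centralBinom ^ 2 * (2 * n + 1) ≤ 16 ^ n := by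
  induction n with
  | zero => simp
  | succ n ih =>
    suffices h : (n + 1) ^ 2 * ((n + 1).centralBinom ^ 2 * (2 * (n + 1) + 1))
        ≤ (n + 1) ^ 2 * 16 ^ (n + 1) from Nat.le_of_mul_le_mul_left h (by positivity)
    calc (n + 1) ^ 2 * ((n + 1).centralBinom ^ 2 * (2 * (n + 1) + 1))
        = ((n + 1) * (n + 1).centralBinom) ^ 2 * (2 * (n + 1) + 1) := by ring
      _ = n.centralBinom ^ 2 * (2 * n + 1) * (4 * (2 * n + 1) * (2 * n + 3)) := by
        rw [Nat.succ_mul_centralBinom_succ]; ring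
      _ ≤ 16 ^ n * (16 * (n + 1) ^ 2) := Nat.mul_le_mul ih (by nlinarith)
      _ = (n + 1) ^ 2 * 16 ^ (n + 1) := by ring

lemma choose_sq_mul_succ_le (n k : ℕ) : n.choose k ^ 2 * (n + 1) ≤ 4 ^ n := by
  suffices hmid : n.choose (n / 2) ^ 2 * (n + 1) ≤ 4 ^ n from
    (Nat.mul_le_mul_right _ (Nat.pow_le_pow_left (Nat.choose_le_middle k n) 2)).trans hmid
  obtain ⟨m, rfl | rfl⟩ := Nat.even_or_odd' n
  · have h := centralBinom_sq_mul_le m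
    rw [Nat.mul_div_cancel_left m two_pos, pow_mul]
    rwa [Nat.centralBinom_eq_two_mul_choose] at h
  · have h := centralBinom_sq_mul_le (m + 1)
    have hcentral : (m + 1).centralBinom = 2 * (2 * m + 1).choose m := by
      rw [Nat.centralBinom_eq_two_mul_choose, show 2 * (m + 1) = (2 * m + 1) + 1 by ring,
        Nat.choose_succ_succ, Nat.choose_symm_half]
      ring
    have hpow : 16 ^ (m + 1) = 4 * 4 ^ (2 * m + 1) := by
      rw [show 16 = 4 ^ 2 by norm_num, ← pow_mul]; ring
    rw [hcentral, hpow] at h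
    rw [show (2 * m + 1) / 2 = m by omega]
    nlinarith

lemma choose_le_two_pow_div_sqrt (n k : ℕ) : (n.choose k : ℝ) ≤ 2 ^ n / √(n + 1) := by
  rw [le_div_iff₀ (by positivity)]
  refine (pow_le_pow_iff_left₀ (by positivity) (by positivity) two_ne_zero).1 ?_
  rw [mul_pow, sq_sqrt (by positivity), pow_right_comm]
  norm_num only
  exact_mod_cast choose_sq_mul_succ_le n k

lemma mul_sum_choose_div_succ (a b : ℝ) (N : ℕ) :
    (N + 1) * a * ∑ j ∈ Finset.range (N + 1), a ^ j * b ^ (N - j) * N.choose j / (j + 1)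
      = (a + b) ^ (N + 1) - b ^ (N + 1) := by
  rw [add_pow, Finset.sum_range_succ' _ (N + 1), Finset.mul_sum]
  simp only [pow_zero, one_mul, Nat.sub_zero, Nat.choose_zero_right, Nat.cast_one, mul_one,
    add_sub_cancel_right, Nat.add_sub_add_right]
  refine Finset.sum_congr rfl fun j _ => ?_
  have hchoose : ((N : ℝ) + 1) * N.choose j = (N + 1).choose (j + 1) * (j + 1) := by
    exact_mod_cast Nat.add_one_mul_choose_eq N j
  rw [mul_div_assoc', div_eq_iff (by positivity)]
  linear_combination a ^ (j + 1) * b ^ (N - j) * hchoose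

lemma sum_choose_div_sqrt_succ_le {a b : ℝ} (ha : 0 < a) (hb : 0 ≤ b) (N : ℕ) :
    ∑ j ∈ Finset.range (N + 1), a ^ j * b ^ (N - j) * N.choose j / √(j + 1)
      ≤ (a + b) ^ N * √((a + b) / ((N + 1) * a)) := by
  set p : ℕ → ℝ := fun j => a ^ j * b ^ (N - j) * N.choose j
  have hp : ∀ j, 0 ≤ p j := fun j => by positivity
  have hmean : ∑ j ∈ Finset.range (N + 1), p j / (j + 1)
      ≤ (a + b) ^ N * ((a + b) / ((N + 1) * a)) := by
    rw [mul_div_assoc', ← pow_succ, le_div_iff₀' (by positivity), mul_sum_choose_div_succ]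
    exact sub_le_self _ (by positivity)
  refine (pow_le_pow_iff_left₀ (Finset.sum_nonneg fun j _ => div_nonneg (hp j) (sqrt_nonneg _))
    (by positivity) two_ne_zero).1 ?_
  calc (∑ j ∈ Finset.range (N + 1), p j / √(j + 1)) ^ 2
      ≤ (∑ j ∈ Finset.range (N + 1), p j) * ∑ j ∈ Finset.range (N + 1), p j / (j + 1) :=
        Finset.sum_sq_le_sum_mul_sum_of_sq_le_mul _ (fun j _ => hp j)
          (fun j _ => div_nonneg (hp j) (by positivity)) fun j _ => by
            rw [div_pow, sq_sqrt (by positivity), sq, mul_div_assoc]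
    _ ≤ (a + b) ^ N * ((a + b) ^ N * ((a + b) / ((N + 1) * a))) := by
        rw [← add_pow]; gcongr
    _ = ((a + b) ^ N * √((a + b) / ((N + 1) * a))) ^ 2 := by
        rw [mul_pow, sq_sqrt (by positivity)]; ring

end Binomial

section Translation

variable {G : Type*} [AddCommGroup G] {Y : Type*} [Fintype Y]

/-- The translation operator `h ↦ h (· + a)` on real functions. -/
def translate (a : G) : Module.End ℝ (G → ℝ) := LinearMap.funLeft ℝ ℝ (· + a)

lemma translate_apply (a : G) (h : G → ℝ) (s : G) : translate a h s = h (s + a) := rfl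

lemma translate_mul (a b : G) : translate a * translate b = translate (a + b) :=
  LinearMap.ext fun h => funext fun s => congrArg h (add_assoc s a b)

lemma translate_commute (a b : G) : Commute (translate a) (translate b) := by
  rw [commute_iff_eq, translate_mul, translate_mul, add_comm]

lemma translate_pow_apply (a : G) (n : ℕ) (h : G → ℝ) (s : G) :
    (translate a ^ n) h s = h (s + n • a) := by
  induction n generalizing s with
  | zero => simp
  | succ n ih =>
    rw [pow_succ', Module.End.mul_apply, translate_apply, ih, succ_nsmul', add_assoc]

/-- The operator `h ↦ ∑ y, w y * h (· + v y)`. Its powers compute expectations of functions of a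
sum of i.i.d. copies of `v`, for the (not necessarily normalised) weight `w`. -/
def translateSum (w : Y → ℝ) (v : Y → G) : Module.End ℝ (G → ℝ) := ∑ y, w y • translate (v y)

lemma translateSum_apply (w : Y → ℝ) (v : Y → G) (h : G → ℝ) (s : G) :
    translateSum w v h s = ∑ y, w y * h (s + v y) := by
  simp [translateSum, translate_apply]

lemma translateSum_add (w w' : Y → ℝ) (v : Y → G) :
    translateSum (w + w') v = translateSum w v + translateSum w' v := by
  simp only [translateSum, Pi.add_apply, add_smul, Finset.sum_add_distrib]

lemma translateSum_single (κ : ℝ) (v : Y → G) (y : Y) :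
    translateSum (Pi.single y κ) v = κ • translate (v y) := by
  simp [translateSum, Pi.single_apply, ite_smul]

lemma translate_commute_translateSum (a : G) (w : Y → ℝ) (v : Y → G) :
    Commute (translate a) (translateSum w v) :=
  Commute.sum_right _ _ _ fun _ _ => (translate_commute _ _).smul_right _

lemma translateSum_pow_apply (w : Y → ℝ) (v : Y → G) (n : ℕ) (h : G → ℝ) (s : G) :
    (translateSum w v ^ n) h s = ∑ y : Fin n → Y, (∏ i, w (y i)) * h (s + ∑ i, v (y i)) := by
  induction n generalizing s with
  | zero => simp
  | succ n ih =>
    rw [pow_succ', Module.End.mul_apply, translateSum_apply,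
      ← (Fin.consEquiv fun _ => Y).sum_comp, Fintype.sum_prod_type]
    simp [ih, Finset.mul_sum, Fin.consEquiv, Fin.prod_univ_succ, Fin.sum_univ_succ, mul_assoc,
      add_assoc]

lemma translateSum_pow_apply_le {w : Y → ℝ} (hw : ∀ y, 0 ≤ w y) (v : Y → G) {h : G → ℝ} {C : ℝ}
    (hC : ∀ s, h s ≤ C) (n : ℕ) (s : G) : (translateSum w v ^ n) h s ≤ (∑ y, w y) ^ n * C := by
  induction n generalizing s with
  | zero => simpa using hC s
  | succ n ih =>
    rw [pow_succ', Module.End.mul_apply, translateSum_apply, pow_succ', mul_assoc, Finset.sum_mul]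
    exact Finset.sum_le_sum fun y _ => mul_le_mul_of_nonneg_left (ih _) (hw y)

variable {h : G → ℝ} {H : ℝ} {a b : G}

lemma translate_add_translate_pow_apply_le (hh : ∀ s, 0 ≤ h s)
    (hH : ∀ c n, ∑ k ∈ Finset.range n, h (c + k • (a - b)) ≤ H) (n : ℕ) (s : G) :
    ((translate a + translate b) ^ n) h s ≤ 2 ^ n / √(n + 1) * H := by
  have hexpand : ((translate a + translate b) ^ n) h s
      = ∑ k ∈ Finset.range (n + 1), n.choose k * h ((s + n • b) + k • (a - b)) := by
    rw [(translate_commute a b).add_pow, LinearMap.sum_apply, Finset.sum_apply]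
    refine Finset.sum_congr rfl fun k hk => ?_
    obtain ⟨m, rfl⟩ := Nat.exists_eq_add_of_le (Nat.lt_succ_iff.1 (Finset.mem_range.1 hk))
    rw [← Nat.cast_comm, ← nsmul_eq_mul, LinearMap.smul_apply, Pi.smul_apply, nsmul_eq_mul,
      Module.End.mul_apply, translate_pow_apply, translate_pow_apply, Nat.add_sub_cancel_left]
    congr 2
    rw [add_nsmul, nsmul_sub]
    abel
  calc ((translate a + translate b) ^ n) h s
      ≤ ∑ k ∈ Finset.range (n + 1), 2 ^ n / √(n + 1) * h ((s + n • b) + k • (a - b)) := by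
        rw [hexpand]
        exact Finset.sum_le_sum fun k _ =>
          mul_le_mul_of_nonneg_right (choose_le_two_pow_div_sqrt n k) (hh _)
    _ ≤ 2 ^ n / √(n + 1) * H := by
        rw [← Finset.mul_sum]
        gcongr
        exact hH _ _

/-- Expanding the power binomially, the `j`-th term uses the fair coin `j` times and thus gains a
factor `1 / √(j + 1)`, where `j` is of order `N` on average. -/
lemma smul_add_translateSum_pow_apply_le (hh : ∀ s, 0 ≤ h s)
    (hH : ∀ c n, ∑ k ∈ Finset.range n, h (c + k • (a - b)) ≤ H) {κ : ℝ} (hκ : 0 < κ)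
    {u : Y → ℝ} (hu : ∀ y, 0 ≤ u y) (v : Y → G) (N : ℕ) (s : G) :
    ((κ • (translate a + translate b) + translateSum u v) ^ N) h s
      ≤ H * ((2 * κ + ∑ y, u y) ^ N * √((2 * κ + ∑ y, u y) / ((N + 1) * (2 * κ)))) := by
  have hH0 : 0 ≤ H := by simpa using hH 0 0
  have hcomm : Commute (κ • (translate a + translate b)) (translateSum u v) :=
    ((translate_commute_translateSum a u v).add_left
      (translate_commute_translateSum b u v)).smul_left κ
  have hterm : ∀ j, (((κ • (translate a + translate b)) ^ j * translateSum u v ^ (N - j)) h s)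
      ≤ κ ^ j * ((∑ y, u y) ^ (N - j) * (2 ^ j / √(j + 1) * H)) := fun j => by
    rw [(hcomm.pow_pow j (N - j)).eq, smul_pow, Module.End.mul_apply, LinearMap.smul_apply,
      map_smul, Pi.smul_apply, smul_eq_mul]
    gcongr
    exact translateSum_pow_apply_le hu v
      (fun s => translate_add_translate_pow_apply_le hh hH j s) (N - j) s
  rw [hcomm.add_pow, LinearMap.sum_apply, Finset.sum_apply]
  calc _ ≤ ∑ j ∈ Finset.range (N + 1),
        H * ((2 * κ) ^ j * (∑ y, u y) ^ (N - j) * N.choose j / √(j + 1)) := by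
        refine Finset.sum_le_sum fun j _ => ?_
        rw [← Nat.cast_comm, ← nsmul_eq_mul, LinearMap.smul_apply, Pi.smul_apply, nsmul_eq_mul]
        refine (mul_le_mul_of_nonneg_left (hterm j) (Nat.cast_nonneg _)).trans_eq ?_
        rw [mul_pow]
        ring
    _ ≤ _ := by
        rw [← Finset.mul_sum]
        gcongr
        exact sum_choose_div_sqrt_succ_le (by positivity) (Finset.sum_nonneg fun y _ => hu y) N

/-- A local limit type bound: two atoms `y₁`, `y₂` of `w` already spread out the sum at scale
`√N`. -/
lemma sum_prod_mul_apply_sum_le {w : Y → ℝ} (hw : ∀ y, 0 ≤ w y) {v : Y → G} {y₁ y₂ : Y}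
    (hne : y₁ ≠ y₂) (h₁ : 0 < w y₁) (h₂ : 0 < w y₂) (hh : ∀ s, 0 ≤ h s)
    (hH : ∀ c n, ∑ k ∈ Finset.range n, h (c + k • (v y₁ - v y₂)) ≤ H) (N : ℕ) (c : G) :
    ∑ y : Fin N → Y, (∏ i, w (y i)) * h (c + ∑ i, v (y i))
      ≤ H * ((∑ y, w y) ^ N * √((∑ y, w y) / ((N + 1) * (2 * min (w y₁) (w y₂))))) := by
  set κ := min (w y₁) (w y₂)
  set u : Y → ℝ := w - (Pi.single y₁ κ + Pi.single y₂ κ) with hu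
  have hdecomp : w = Pi.single y₁ κ + Pi.single y₂ κ + u := by rw [hu]; abel
  have hu0 : ∀ y, 0 ≤ u y := fun y => by
    have hκ₁ : κ ≤ w y₁ := min_le_left _ _
    have hκ₂ : κ ≤ w y₂ := min_le_right _ _
    simp only [hu, Pi.sub_apply, Pi.add_apply, Pi.single_apply]
    split_ifs with e₁ e₂ e₂
    · exact absurd (e₁.symm.trans e₂) hne
    · subst e₁; linarith
    · subst e₂; linarith
    · linarith [hw y]
  have hsum : ∑ y, w y = 2 * κ + ∑ y, u y := by
    simp only [hu, Pi.sub_apply, Pi.add_apply, Finset.sum_sub_distrib, Finset.sum_add_distrib,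
      Finset.sum_pi_single', Finset.mem_univ, if_true]
    ring
  have hop : translateSum w v = κ • (translate (v y₁) + translate (v y₂)) + translateSum u v := by
    rw [smul_add, ← translateSum_single, ← translateSum_single, ← translateSum_add,
      ← translateSum_add, ← hdecomp]
  rw [← translateSum_pow_apply w v N h c, hop, hsum]
  exact smul_add_translateSum_pow_apply_le hh hH (lt_min h₁ h₂) hu0 v N c

end Translation

section AntiConcentration

lemma summable_exp_neg_mul_abs_int {r : ℝ} (hr : 0 < r) :
    Summable fun j : ℤ => exp (-r * |(j : ℝ)|) := by
  have hnat : Summable fun n : ℕ => exp (n * -r) :=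
    summable_exp_nat_mul_iff.2 (neg_neg_of_pos hr)
  exact Summable.of_nat_of_neg (by simpa [mul_comm] using hnat) (by simpa [mul_comm] using hnat)

lemma abs_sub_round_mul_le {d : ℝ} (hd : 0 < d) (c : ℝ) (k : ℤ) :
    |(k - round (-c / d) : ℝ)| * d ≤ |c + k * d| + d := by
  have hmul_abs : ∀ x : ℝ, |x| * d = |x * d| := fun x => by rw [abs_mul, abs_of_pos hd]
  calc |(k - round (-c / d) : ℝ)| * d
      = |(c + k * d) + (-c / d - round (-c / d)) * d| := by
        rw [hmul_abs]; congr 1; field_simp; ring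
    _ ≤ |c + k * d| + |-c / d - round (-c / d)| * d := by rw [hmul_abs]; exact abs_add_le _ _
    _ ≤ |c + k * d| + d := by
        gcongr
        exact mul_le_of_le_one_left hd.le ((abs_sub_round _).trans (by norm_num))

lemma exists_sum_exp_neg_abs_le {δ d : ℝ} (hδ : 0 < δ) (hd : 0 < d) :
    ∃ H : ℝ, 0 < H ∧ ∀ (c : ℝ) (n : ℕ),
      ∑ k ∈ Finset.range n, exp (-δ * |c + k * d|) ≤ H := by
  have hsum := summable_exp_neg_mul_abs_int (mul_pos hδ hd)
  set g : ℤ → ℝ := fun j => exp (-(δ * d) * |(j : ℝ)|) with hg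
  have hg0 : ∀ j, 0 < g j := fun j => exp_pos _
  refine ⟨exp (δ * d) * ∑' j, g j,
    mul_pos (exp_pos _) (hsum.tsum_pos (fun j => (hg0 j).le) 0 (hg0 0)), fun c n => ?_⟩
  have hinj : Function.Injective fun k : ℕ => (k : ℤ) - round (-c / d) :=
    fun i j h => by simpa using h
  have hterm : ∀ k : ℕ, exp (-δ * |c + k * d|) ≤ exp (δ * d) * g (k - round (-c / d)) :=
    fun k => by
      have h := mul_le_mul_of_nonneg_left (abs_sub_round_mul_le hd c k) hδ.le
      simp only [hg]
      rw [← exp_add, exp_le_exp]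
      push_cast at h ⊢
      linarith
  calc ∑ k ∈ Finset.range n, exp (-δ * |c + k * d|)
      ≤ exp (δ * d) * ∑ k ∈ Finset.range n, g (k - round (-c / d)) := by
        rw [Finset.mul_sum]
        exact Finset.sum_le_sum fun k _ => hterm k
    _ ≤ exp (δ * d) * ∑' k : ℕ, g (k - round (-c / d)) := by
        gcongr
        exact (hsum.comp_injective hinj).sum_le_tsum _ fun k _ => (hg0 _).le
    _ ≤ exp (δ * d) * ∑' j, g j := by
        gcongr
        exact tsum_comp_le_tsum_of_inj hsum (fun j => (hg0 j).le) hinj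

lemma exists_sum_prod_mul_exp_neg_abs_le {Y : Type*} [Fintype Y] {w : Y → ℝ} (hw : ∀ y, 0 ≤ w y)
    {v : Y → ℝ} {y₁ y₂ : Y} (h₁ : 0 < w y₁) (h₂ : 0 < w y₂) (hv : v y₂ < v y₁)
    {δ : ℝ} (hδ : 0 < δ) :
    ∃ K : ℝ, 0 < K ∧ ∀ N : ℕ, 0 < N → ∀ c : ℝ,
      ∑ y : Fin N → Y, (∏ i, w (y i)) * exp (-δ * |c + ∑ i, v (y i)|)
        ≤ K / √N * (∑ y, w y) ^ N := by
  obtain ⟨H, hH, hsum⟩ := exists_sum_exp_neg_abs_le hδ (sub_pos.2 hv)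
  have hZ : 0 < ∑ y, w y := Finset.sum_pos' (fun y _ => hw y) ⟨y₁, Finset.mem_univ _, h₁⟩
  set Z := ∑ y, w y
  set κ := min (w y₁) (w y₂)
  have : 0 < κ := lt_min h₁ h₂
  refine ⟨H * √(Z / (2 * κ)), by positivity, fun N hN c => ?_⟩
  calc ∑ y : Fin N → Y, (∏ i, w (y i)) * exp (-δ * |c + ∑ i, v (y i)|)
      ≤ H * (Z ^ N * √(Z / ((N + 1) * (2 * κ)))) :=
        sum_prod_mul_apply_sum_le (h := fun s => exp (-δ * |s|)) hw
          (ne_of_apply_ne v hv.ne') h₁ h₂ (fun _ => (exp_pos _).le)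
          (by simpa only [nsmul_eq_mul] using hsum) N c
    _ ≤ H * (Z ^ N * √(Z / (2 * κ) / N)) := by
        rw [div_div, mul_comm (2 * κ)]
        gcongr
        linarith
    _ = H * √(Z / (2 * κ)) / √N * Z ^ N := by
        rw [sqrt_div' _ (Nat.cast_nonneg N)]; ring

end AntiConcentration

section Tilting

lemma min_one_le_rpow_mul_exp {t ρ δ : ℝ} (ht : 0 < t) (h₁ : δ ≤ ρ) (h₂ : ρ + δ ≤ 1) :
    min 1 t ≤ t ^ ρ * exp (-δ * |log t|) := by
  rw [rpow_def_of_pos ht, ← exp_add]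
  rcases le_total t 1 with h | h
  · refine (min_le_right _ _).trans ((exp_log ht).symm.trans_le (exp_le_exp.2 ?_))
    have := log_nonpos ht.le h
    rw [abs_of_nonpos this]
    nlinarith
  · refine (min_le_left _ _).trans (one_le_exp ?_)
    have := log_nonneg h
    rw [abs_of_nonneg this]
    nlinarith

variable {Y : Type*} {p q : Y → ℝ}

lemma prod_mul_min_one_le {ι : Type*} [Fintype ι] (hp : ∀ y, 0 ≤ p y) (hq : ∀ y, 0 ≤ q y)
    (hpq : ∀ y, 0 < p y → 0 < q y) {ρ δ : ℝ} (h₁ : δ ≤ ρ) (h₂ : ρ + δ ≤ 1) {t : ℝ} (ht : 0 < t)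
    (y : ι → Y) :
    (∏ i, p (y i)) * min 1 (t * ∏ i, q (y i))
      ≤ t ^ ρ * ((∏ i, p (y i) * q (y i) ^ ρ) * exp (-δ * |log t + ∑ i, log (q (y i))|)) := by
  by_cases hall : ∀ i, 0 < p (y i)
  · have hq0 : ∀ i, 0 < q (y i) := fun i => hpq _ (hall i)
    have hprod : 0 < ∏ i, q (y i) := Finset.prod_pos fun i _ => hq0 i
    calc (∏ i, p (y i)) * min 1 (t * ∏ i, q (y i))
        ≤ (∏ i, p (y i)) * ((t * ∏ i, q (y i)) ^ ρ * exp (-δ * |log (t * ∏ i, q (y i))|)) :=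
          mul_le_mul_of_nonneg_left (min_one_le_rpow_mul_exp (mul_pos ht hprod) h₁ h₂)
            (Finset.prod_nonneg fun i _ => hp _)
      _ = _ := by
          rw [log_mul ht.ne' hprod.ne', log_prod fun i _ => (hq0 i).ne', mul_rpow ht.le hprod.le,
            ← finsetProd_rpow _ _ fun i _ => hq _, Finset.prod_mul_distrib]
          ring
  · push Not at hall
    obtain ⟨i, hi⟩ := hall
    rw [Finset.prod_eq_zero (Finset.mem_univ i) (le_antisymm hi (hp _)), zero_mul]
    exact mul_nonneg (rpow_nonneg ht.le _) (mul_nonneg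
      (Finset.prod_nonneg fun i _ => mul_nonneg (hp _) (rpow_nonneg (hq _) _)) (exp_pos _).le)

/-- Interpolating `min 1 s ≤ s ^ ρ` alone gives the Chernoff bound; for `0 < ρ < 1` the slack away
from `s = 1` turns it into an anti-concentration estimate and thus gains the factor `1 / √N`. -/
lemma exists_sum_prod_mul_min_one_le [Fintype Y] (hp : ∀ y, 0 ≤ p y)
    (hq : ∀ y, 0 ≤ q y) (hpq : ∀ y, 0 < p y → 0 < q y) {y₁ y₂ : Y} (h₁ : 0 < p y₁)
    (h₂ : 0 < p y₂) (hlt : q y₂ < q y₁) {ρ : ℝ} (hρ : ρ ∈ Set.Ioo (0 : ℝ) 1) :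
    ∃ K : ℝ, 0 < K ∧ ∀ N : ℕ, 0 < N → ∀ t : ℝ, 0 < t →
      ∑ y : Fin N → Y, (∏ n, p (y n)) * min 1 (t * ∏ n, q (y n))
        ≤ K / √N * (t ^ ρ * (∑ y, p y * q y ^ ρ) ^ N) := by
  set δ := min ρ (1 - ρ)
  have hδ : 0 < δ := lt_min hρ.1 (sub_pos.2 hρ.2)
  have hw_pos : ∀ y, 0 < p y → 0 < p y * q y ^ ρ := fun y hy =>
    mul_pos hy (rpow_pos_of_pos (hpq y hy) ρ)
  obtain ⟨K, hK, hbound⟩ := exists_sum_prod_mul_exp_neg_abs_le (w := fun y => p y * q y ^ ρ)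
    (v := fun y => log (q y)) (fun y => mul_nonneg (hp y) (rpow_nonneg (hq y) ρ)) (hw_pos y₁ h₁)
    (hw_pos y₂ h₂) (log_lt_log (hpq y₂ h₂) hlt) hδ
  refine ⟨K, hK, fun N hN t ht => ?_⟩
  calc ∑ y : Fin N → Y, (∏ n, p (y n)) * min 1 (t * ∏ n, q (y n))
      ≤ t ^ ρ * ∑ y : Fin N → Y,
          (∏ n, p (y n) * q (y n) ^ ρ) * exp (-δ * |log t + ∑ n, log (q (y n))|) := by
        rw [Finset.mul_sum]
        exact Finset.sum_le_sum fun y _ => prod_mul_min_one_le hp hq hpq (min_le_left _ _)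
          (by linarith [min_le_right ρ (1 - ρ)]) ht y
    _ ≤ t ^ ρ * (K / √N * (∑ y, p y * q y ^ ρ) ^ N) := by gcongr; exact hbound N hN _
    _ = K / √N * (t ^ ρ * (∑ y, p y * q y ^ ρ) ^ N) := mul_left_comm _ _ _

end Tilting

section OneShot

variable {A B : Type*}

lemma IsDist.exists_pos [Fintype A] {P : A → ℝ} (hP : IsDist P) : ∃ a, 0 < P a := by
  obtain ⟨a, -, ha⟩ := Finset.exists_ne_zero_of_sum_ne_zero (hP.2.trans_ne one_ne_zero)
  exact ⟨a, (hP.1 a).lt_of_ne' ha⟩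

lemma IsDist.exists_le_of_sum_mul_le [Fintype A] {P : A → ℝ} (hP : IsDist P) {g : A → ℝ} {t : ℝ}
    (h : ∑ a, P a * g a ≤ t) : ∃ a, g a ≤ t := by
  by_contra! hlt
  obtain ⟨a, ha⟩ := hP.exists_pos
  refine (Finset.sum_lt_sum (fun a _ => mul_le_mul_of_nonneg_left (hlt a).le (hP.1 a))
    ⟨a, Finset.mem_univ a, mul_lt_mul_of_pos_left (hlt a) ha⟩).not_ge ?_
  rwa [← Finset.sum_mul, hP.2, one_mul]

lemma sum_union_le {g : B → ℝ} (hg : ∀ b, 0 ≤ g b) (S T : Finset B) :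
    ∑ b ∈ S ∪ T, g b ≤ ∑ b ∈ S, g b + ∑ b ∈ T, g b := by
  rw [← Finset.sum_union_inter]
  exact le_add_of_nonneg_right (Finset.sum_nonneg fun b _ => hg b)

lemma sum_sup_le {g : B → ℝ} (hg : ∀ b, 0 ≤ g b) {ι : Type*} (I : Finset ι) (S : ι → Finset B) :
    ∑ b ∈ I.sup S, g b ≤ ∑ i ∈ I, ∑ b ∈ S i, g b :=
  Finset.apply_sup_le_sum (f := fun T : Finset B => ∑ b ∈ T, g b) Finset.sum_empty
    (sum_union_le hg _ _) I

lemma sum_sup_Iio_le {g : B → ℝ} (hg : ∀ b, 0 ≤ g b) {S : ℕ → Finset B} {m : ℕ} {t c : ℝ}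
    (ht : 0 < t) (hm : m ≤ t) (hc : 0 ≤ c) (hS : ∀ j < m, t * ∑ b ∈ S j, g b ≤ c) :
    ∑ b ∈ (Finset.Iio m).sup S, g b ≤ c := by
  refine le_of_mul_le_mul_left ?_ ht
  calc t * ∑ b ∈ (Finset.Iio m).sup S, g b
      ≤ t * ∑ j ∈ Finset.Iio m, ∑ b ∈ S j, g b := by gcongr; exact sum_sup_le hg _ _
    _ ≤ ∑ _j ∈ Finset.Iio m, c := by
        rw [Finset.mul_sum]
        exact Finset.sum_le_sum fun j hj => hS j (Finset.mem_Iio.1 hj)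
    _ ≤ t * c := by
        rw [Finset.sum_const, Nat.card_Iio, nsmul_eq_mul]
        gcongr

lemma exists_seq_eq_apply_sup (D : A → Finset B) (r : Finset B → A) :
    ∃ f : ℕ → A, ∀ m, f m = r ((Finset.Iio m).sup fun j => D (f j)) := by
  let U : ℕ → Finset B := fun m => Nat.rec ∅ (fun _ S => S ∪ D (r S)) m
  refine ⟨fun m => r (U m), fun m => congrArg r ?_⟩
  induction m with
  | zero => rfl
  | succ m ih =>
    rw [Nat.Iio_eq_range, Finset.range_add_one, Finset.sup_insert, ← Nat.Iio_eq_range, ← ih,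
      sup_comm]
    rfl

lemma exists_decoder {M : ℕ} (hM : 0 < M) (E : ℕ → Finset B) :
    ∃ φ : B → Fin M, ∀ (m : Fin M) (b : B), b ∈ disjointed E m → φ b = m := by
  suffices h : ∀ b, ∃ i : Fin M, ∀ m : Fin M, b ∈ disjointed E m → i = m by
    choose φ hφ using h
    exact ⟨φ, fun m b => hφ b m⟩
  intro b
  by_cases hb : ∃ i : Fin M, b ∈ disjointed E i
  · obtain ⟨i, hi⟩ := hb
    refine ⟨i, fun m hm => Fin.ext ?_⟩
    by_contra hne
    exact Finset.disjoint_left.1 (disjoint_disjointed E hne) hi hm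
  · exact ⟨⟨0, hM⟩, fun m hm => absurd ⟨m, hm⟩ hb⟩

/-- The output distribution `y ↦ ∑ x, Q x * W x y` of the channel `W` under the input
distribution `Q`. -/
def outDist [Fintype A] (W : A → B → ℝ) (Q : A → ℝ) (y : B) : ℝ := ∑ x, Q x * W x y

/-- The `Q`-probability of the inputs from which `W` can produce the output `y`. -/
noncomputable def supportMass [Fintype A] (W : A → B → ℝ) (Q : A → ℝ) (y : B) : ℝ :=
  ∑ x with 0 < W x y, Q x

variable [Fintype A] {V : A → B → ℝ} {P : A → ℝ}

lemma outDist_nonneg (hP : ∀ a, 0 ≤ P a) (hV : ∀ a b, 0 ≤ V a b) (b : B) : 0 ≤ outDist V P b :=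
  Finset.sum_nonneg fun a _ => mul_nonneg (hP a) (hV a b)

lemma supportMass_nonneg (hP : ∀ a, 0 ≤ P a) (b : B) : 0 ≤ supportMass V P b :=
  Finset.sum_nonneg fun a _ => hP a

lemma sum_mul_sum_mul_eq_sum_outDist_mul (V : A → B → ℝ) (P : A → ℝ) (S : Finset B) (g : B → ℝ) :
    ∑ a, P a * ∑ b ∈ S, V a b * g b = ∑ b ∈ S, outDist V P b * g b := by
  simp only [outDist, Finset.mul_sum, Finset.sum_mul, mul_assoc]
  exact Finset.sum_comm

variable [Fintype B] {D : A → Finset B} {t ε : ℝ}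

/-- One greedy step, where `U` is the region claimed by the codewords chosen so far. -/
lemma exists_codeword (hP : IsDist P) (hV : ∀ a b, 0 ≤ V a b) (ht : 0 ≤ t)
    (hmiss : ∑ a, P a * ∑ b ∈ (D a)ᶜ, V a b ≤ ε)
    (halarm : t * ∑ a, P a * ∑ b ∈ D a, outDist V P b ≤ ε)
    {U : Finset B} (hU : ∑ b ∈ U, outDist V P b ≤ 2 * ε) :
    ∃ a, ∑ b ∈ (D a \ U)ᶜ, V a b ≤ 6 * ε ∧ t * ∑ b ∈ D a, outDist V P b ≤ 2 * ε := by
  have hsum0 : ∀ a S, 0 ≤ ∑ b ∈ S, V a b := fun a S => Finset.sum_nonneg fun b _ => hV a b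
  have hclaimed : ∑ a, P a * ∑ b ∈ U, V a b = ∑ b ∈ U, outDist V P b := by
    simpa using sum_mul_sum_mul_eq_sum_outDist_mul V P U 1
  obtain ⟨a, ha⟩ := hP.exists_le_of_sum_mul_le (t := 6 * ε) (g := fun a =>
      ∑ b ∈ (D a)ᶜ, V a b + ∑ b ∈ U, V a b + 3 * (t * ∑ b ∈ D a, outDist V P b)) <| by
    calc _ = ∑ a, P a * ∑ b ∈ (D a)ᶜ, V a b + ∑ a, P a * ∑ b ∈ U, V a b
          + 3 * (t * ∑ a, P a * ∑ b ∈ D a, outDist V P b) := by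
          simp only [mul_add, Finset.sum_add_distrib, mul_left_comm (P _) 3,
            mul_left_comm (P _) t, ← Finset.mul_sum]
      _ ≤ 6 * ε := by linarith
  have halarm0 : 0 ≤ t * ∑ b ∈ D a, outDist V P b :=
    mul_nonneg ht (Finset.sum_nonneg fun b _ => outDist_nonneg hP.1 hV b)
  have hunion : ∑ b ∈ (D a \ U)ᶜ, V a b ≤ ∑ b ∈ (D a)ᶜ, V a b + ∑ b ∈ U, V a b := by
    rw [sdiff_eq, compl_inf, compl_compl]
    exact sum_union_le (hV a) _ _
  exact ⟨a, by linarith, by linarith [hsum0 a (D a)ᶜ, hsum0 a U]⟩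

lemma exists_codewords (hP : IsDist P) (hV : ∀ a b, 0 ≤ V a b) (ht : 0 < t)
    (hmiss : ∑ a, P a * ∑ b ∈ (D a)ᶜ, V a b ≤ ε)
    (halarm : t * ∑ a, P a * ∑ b ∈ D a, outDist V P b ≤ ε) :
    ∃ f : ℕ → A, ∀ m : ℕ, m ≤ t →
      ∑ b ∈ (disjointed (fun j => D (f j)) m)ᶜ, V (f m) b ≤ 6 * ε := by
  have hstep : ∀ U : Finset B, ∃ a, ∑ b ∈ U, outDist V P b ≤ 2 * ε →
      ∑ b ∈ (D a \ U)ᶜ, V a b ≤ 6 * ε ∧ t * ∑ b ∈ D a, outDist V P b ≤ 2 * ε := fun U => by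
    by_cases hU : ∑ b ∈ U, outDist V P b ≤ 2 * ε
    · obtain ⟨a, ha⟩ := exists_codeword hP hV ht.le hmiss halarm hU
      exact ⟨a, fun _ => ha⟩
    · obtain ⟨a, -⟩ := hP.exists_pos
      exact ⟨a, fun h => absurd h hU⟩
  choose r hr using hstep
  obtain ⟨f, hf⟩ := exists_seq_eq_apply_sup D r
  have hε : 0 ≤ ε := le_trans (Finset.sum_nonneg fun a _ =>
    mul_nonneg (hP.1 a) (Finset.sum_nonneg fun b _ => hV a b)) hmiss
  suffices h : ∀ m : ℕ, m ≤ t → ∑ b ∈ (disjointed (fun j => D (f j)) m)ᶜ, V (f m) b ≤ 6 * ε ∧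
      t * ∑ b ∈ D (f m), outDist V P b ≤ 2 * ε from ⟨f, fun m hm => (h m hm).1⟩
  intro m
  induction m using Nat.strong_induction_on with
  | _ m ih =>
    intro hm
    rw [disjointed_apply, hf m]
    exact hr _ (sum_sup_Iio_le (outDist_nonneg hP.1 hV) ht hm (by positivity)
      fun j hj => (ih j hj ((Nat.cast_le.2 hj.le).trans hm)).2)

lemma exists_code (hP : IsDist P) (hV : ∀ a b, 0 ≤ V a b) {M : ℕ} (hM : 0 < M) (ht : 0 < t)
    (hMt : M ≤ t + 1) (hmiss : ∑ a, P a * ∑ b ∈ (D a)ᶜ, V a b ≤ ε)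
    (halarm : t * ∑ a, P a * ∑ b ∈ D a, outDist V P b ≤ ε) :
    ∃ (f : Fin M → A) (φ : B → Fin M), ∀ m, ∑ b with φ b ≠ m, V (f m) b ≤ 6 * ε := by
  obtain ⟨f, hf⟩ := exists_codewords hP hV ht hmiss halarm
  obtain ⟨φ, hφ⟩ := exists_decoder hM fun j => D (f j)
  refine ⟨fun m => f m, φ, fun m => le_trans ?_ (hf m ?_)⟩
  · refine Finset.sum_le_sum_of_subset_of_nonneg (fun b hb => ?_) fun b _ _ => hV _ b
    exact Finset.mem_compl.2 fun hmem => (Finset.mem_filter.1 hb).2 (hφ m b hmem)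
  · have : ((m + 1 : ℕ) : ℝ) ≤ M := Nat.cast_le.2 m.2
    push_cast at this
    linarith

/-- A codeword claims the outputs compatible with it, apart from those compatible with so much of
the input space that decoding is hopeless. -/
lemma exists_code_le_sum_min_one (hP : IsDist P) (hV : ∀ a b, 0 ≤ V a b) {M : ℕ} (hM : 0 < M)
    (ht : 0 < t) (hMt : M ≤ t + 1) :
    ∃ (f : Fin M → A) (φ : B → Fin M), ∀ m, ∑ b with φ b ≠ m, V (f m) b
      ≤ 6 * ∑ b, outDist V P b * min 1 (t * supportMass V P b) := by
  have hmin0 : ∀ b, 0 ≤ min 1 (t * supportMass V P b) := fun b =>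
    le_min zero_le_one (mul_nonneg ht.le (supportMass_nonneg hP.1 b))
  refine exists_code (D := fun a => {b | 0 < V a b ∧ t * supportMass V P b < 1}) hP hV hM ht hMt
    ?_ ?_
  · rw [← sum_mul_sum_mul_eq_sum_outDist_mul]
    refine Finset.sum_le_sum fun a _ => mul_le_mul_of_nonneg_left ?_ (hP.1 a)
    refine (Finset.sum_le_sum fun b hb => ?_).trans (Finset.sum_le_sum_of_subset_of_nonneg
      (Finset.subset_univ _) fun b _ _ => mul_nonneg (hV a b) (hmin0 b))
    rcases (hV a b).eq_or_lt with h | h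
    · simp [← h]
    · have : 1 ≤ t * supportMass V P b := by simpa [h] using hb
      rw [min_eq_left this, mul_one]
  · simp only [Finset.sum_filter, Finset.mul_sum]
    rw [Finset.sum_comm]
    refine Finset.sum_le_sum fun b _ => ?_
    by_cases h : t * supportMass V P b < 1
    · simp only [h, and_true, min_eq_right h.le, mul_ite, mul_zero, ← Finset.sum_filter]
      rw [← Finset.mul_sum, ← Finset.sum_mul, ← supportMass, mul_comm _ (outDist V P b),
        mul_left_comm]
    · simpa [h] using mul_nonneg (outDist_nonneg hP.1 hV b) (hmin0 b)

end OneShot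

section Singular

variable {X Y : Type*} [Fintype X] {W : X → Y → ℝ} {Q : X → ℝ} {y : Y}

/-- The inner sum `∑ x, Q x * W x y ^ (1 / (1 + ρ))` of the Gallager function. -/
noncomputable def gallagerMean (W : X → Y → ℝ) (ρ : ℝ) (Q : X → ℝ) (y : Y) : ℝ :=
  ∑ x, Q x * W x y ^ (1 / (1 + ρ))

lemma gallagerMean_zero (W : X → Y → ℝ) (Q : X → ℝ) (y : Y) :
    gallagerMean W 0 Q y = outDist W Q y := by
  simp [gallagerMean, outDist]

lemma gallagerMean_nonneg (hQ : ∀ x, 0 ≤ Q x) (hW : ∀ x y, 0 ≤ W x y) (ρ : ℝ) (y : Y) :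
    0 ≤ gallagerMean W ρ Q y :=
  Finset.sum_nonneg fun x _ => mul_nonneg (hQ x) (rpow_nonneg (hW x y) _)

lemma gallagerMean_pos (hQ : ∀ x, 0 ≤ Q x) (hW : ∀ x y, 0 ≤ W x y) (ρ : ℝ) {x : X}
    (hx : 0 < Q x) (hxy : 0 < W x y) : 0 < gallagerMean W ρ Q y :=
  Finset.sum_pos' (fun x _ => mul_nonneg (hQ x) (rpow_nonneg (hW x y) _))
    ⟨x, Finset.mem_univ x, mul_pos hx (rpow_pos_of_pos hxy _)⟩

lemma gallagerMean_eq_zero (hQ : ∀ x, 0 ≤ Q x) (hW : ∀ x y, 0 ≤ W x y) {ρ : ℝ} (hρ : 1 + ρ ≠ 0)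
    (hy : outDist W Q y = 0) : gallagerMean W ρ Q y = 0 := by
  refine Finset.sum_eq_zero fun x hx => ?_
  rcases mul_eq_zero.1 ((Finset.sum_eq_zero_iff_of_nonneg
    fun x _ => mul_nonneg (hQ x) (hW x y)).1 hy x hx) with h | h
  · rw [h, zero_mul]
  · rw [h, zero_rpow (one_div_ne_zero hρ), mul_zero]

lemma exists_pos_of_outDist_pos (hQ : ∀ x, 0 ≤ Q x) (hW : ∀ x y, 0 ≤ W x y)
    (hy : 0 < outDist W Q y) : ∃ x, 0 < Q x ∧ 0 < W x y := by
  obtain ⟨x, -, hx⟩ := Finset.exists_ne_zero_of_sum_ne_zero hy.ne'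
  exact ⟨x, (hQ x).lt_of_ne' (left_ne_zero_of_mul hx), (hW x y).lt_of_ne' (right_ne_zero_of_mul hx)⟩

lemma supportMass_pos (hQ : ∀ x, 0 ≤ Q x) (hW : ∀ x y, 0 ≤ W x y) (hy : 0 < outDist W Q y) :
    0 < supportMass W Q y := by
  obtain ⟨x, hx, hxy⟩ := exists_pos_of_outDist_pos hQ hW hy
  exact Finset.sum_pos' (fun x _ => hQ x) ⟨x, by simpa using hxy, hx⟩

lemma gallagerMean_of_singular (hQ : ∀ x, 0 ≤ Q x) (hW : ∀ x y, 0 ≤ W x y) (hs : Singular W Q)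
    {ρ : ℝ} (hρ : 1 + ρ ≠ 0) {x₀ : X} (hx₀ : 0 < Q x₀) (hy₀ : 0 < W x₀ y) :
    gallagerMean W ρ Q y = supportMass W Q y * W x₀ y ^ (1 / (1 + ρ)) := by
  rw [gallagerMean, supportMass, Finset.sum_filter, Finset.sum_mul]
  refine Finset.sum_congr rfl fun x _ => ?_
  rcases (hQ x).eq_or_lt with hx | hx
  · simp [← hx]
  rcases (hW x y).eq_or_lt with hxy | hxy
  · rw [if_neg hxy.not_lt, ← hxy, zero_rpow (one_div_ne_zero hρ), mul_zero, zero_mul]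
  · rw [if_pos hxy, hs x y x₀ (by positivity)]

lemma gallagerMean_rpow_of_singular (hQ : ∀ x, 0 ≤ Q x) (hW : ∀ x y, 0 ≤ W x y)
    (hs : Singular W Q) {ρ : ℝ} (hρ : 0 < 1 + ρ) (y : Y) :
    gallagerMean W ρ Q y ^ (1 + ρ) = outDist W Q y * supportMass W Q y ^ ρ := by
  rcases (outDist_nonneg hQ hW y).eq_or_lt with hy | hy
  · rw [gallagerMean_eq_zero hQ hW hρ.ne' hy.symm, ← hy, zero_mul, zero_rpow hρ.ne']
  · obtain ⟨x₀, hx₀, hy₀⟩ := exists_pos_of_outDist_pos hQ hW hy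
    have hmass := supportMass_pos hQ hW hy
    rw [← gallagerMean_zero, gallagerMean_of_singular hQ hW hs hρ.ne' hx₀ hy₀,
      gallagerMean_of_singular hQ hW hs (by norm_num) hx₀ hy₀, mul_rpow hmass.le (by positivity),
      ← rpow_mul hy₀.le, one_div_mul_cancel hρ.ne', add_zero, div_one, rpow_one,
      rpow_add hmass, rpow_one]
    ring

variable [Fintype Y]

lemma Eo_eq_of_singular (hQ : ∀ x, 0 ≤ Q x) (hW : ∀ x y, 0 ≤ W x y) (hs : Singular W Q) {ρ : ℝ}
    (hρ : 0 < 1 + ρ) : Eo W ρ Q = -log (∑ y, outDist W Q y * supportMass W Q y ^ ρ) :=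
  congrArg (-log ·) (Finset.sum_congr rfl fun y _ => gallagerMean_rpow_of_singular hQ hW hs hρ y)

end Singular

section Memoryless

variable {X Y : Type*} {W : X → Y → ℝ} {Q : X → ℝ} {N : ℕ}

lemma Wn_nonneg (hW : ∀ x y, 0 ≤ W x y) (c : Fin N → X) (y : Fin N → Y) : 0 ≤ Wn W c y :=
  Finset.prod_nonneg fun _ _ => hW _ _

lemma Wn_pos_iff (hW : ∀ x y, 0 ≤ W x y) (c : Fin N → X) (y : Fin N → Y) :
    0 < Wn W c y ↔ ∀ n, 0 < W (c n) (y n) := by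
  refine ⟨fun h n => (hW _ _).lt_of_ne' fun h0 => h.ne' ?_, fun h => Finset.prod_pos fun n _ => h n⟩
  exact Finset.prod_eq_zero (Finset.mem_univ n) h0

variable [Fintype X]

lemma IsDist.prod {ι : Type*} [Fintype ι] [DecidableEq ι] (hQ : IsDist Q) :
    IsDist fun c : ι → X => ∏ i, Q (c i) :=
  ⟨fun c => Finset.prod_nonneg fun _ _ => hQ.1 _, by
    rw [← Fintype.prod_sum fun (_ : ι) x => Q x, hQ.2, Finset.prod_const_one]⟩

lemma outDist_Wn (W : X → Y → ℝ) (Q : X → ℝ) (y : Fin N → Y) :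
    outDist (Wn W) (fun c => ∏ n, Q (c n)) y = ∏ n, outDist W Q (y n) := by
  simp only [outDist, Wn, ← Finset.prod_mul_distrib]
  exact (Fintype.prod_sum fun n x => Q x * W x (y n)).symm

lemma supportMass_Wn (hW : ∀ x y, 0 ≤ W x y) (Q : X → ℝ) (y : Fin N → Y) :
    supportMass (Wn W) (fun c => ∏ n, Q (c n)) y = ∏ n, supportMass W Q (y n) := by
  simp only [supportMass, Wn_pos_iff hW, Finset.prod_univ_sum]
  exact Finset.sum_congr (by ext; simp [Fintype.mem_piFinset]) fun _ _ => rfl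

variable [Fintype Y]

lemma exists_code_Pmax_le (hQ : IsDist Q) (hW : ∀ x y, 0 ≤ W x y) {M : ℕ} (hM : 0 < M) {t : ℝ}
    (ht : 0 < t) (hMt : M ≤ t + 1) :
    ∃ (f : Fin M → Fin N → X) (φ : (Fin N → Y) → Fin M), Pmax W f φ ≤ 6 *
      ∑ y : Fin N → Y, (∏ n, outDist W Q (y n)) * min 1 (t * ∏ n, supportMass W Q (y n)) := by
  obtain ⟨f, φ, h⟩ := exists_code_le_sum_min_one (hQ.prod (ι := Fin N)) (Wn_nonneg hW) hM ht hMt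
  simp only [outDist_Wn, supportMass_Wn hW] at h
  have : Nonempty (Fin M) := ⟨⟨0, hM⟩⟩
  refine ⟨f, φ, ciSup_le fun m => ?_⟩
  simpa only [mul_ite, mul_one, mul_zero, ← Finset.sum_filter] using h m

end Memoryless

section Derivative

variable {X Y : Type*} [Fintype X] {W : X → Y → ℝ} {Q : X → ℝ}

lemma hasDerivAt_rpow_one_div_one_add {a : ℝ} (ha : 0 ≤ a) :
    HasDerivAt (fun ρ : ℝ => a ^ (1 / (1 + ρ))) (-(a * log a)) 0 := by
  rcases ha.eq_or_lt with rfl | ha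
  · refine (hasDerivAt_const (0 : ℝ) (0 : ℝ)).congr_of_eventuallyEq ?_ |>.congr_deriv (by simp)
    filter_upwards [lt_mem_nhds (neg_one_lt_zero (R := ℝ))] with ρ hρ
    exact zero_rpow (one_div_ne_zero (neg_lt_iff_pos_add'.1 hρ).ne')
  · have h : HasDerivAt (fun ρ : ℝ => 1 / (1 + ρ)) (-1) 0 := by
      simpa using ((hasDerivAt_id' (0 : ℝ)).const_add 1).fun_inv (by norm_num)
    simpa [mul_comm] using h.const_rpow ha

lemma hasDerivAt_gallagerMean_zero (hW : ∀ x y, 0 ≤ W x y) (Q : X → ℝ) (y : Y) :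
    HasDerivAt (fun ρ => gallagerMean W ρ Q y) (-∑ x, Q x * W x y * log (W x y)) 0 := by
  refine (HasDerivAt.fun_sum fun x _ =>
    (hasDerivAt_rpow_one_div_one_add (hW x y)).const_mul (Q x)).congr_deriv ?_
  simp only [mul_neg, Finset.sum_neg_distrib, mul_assoc]

lemma sum_mul_log_div_outDist (hW : ∀ x y, 0 ≤ W x y) {y : Y} (hy : outDist W Q y ≠ 0) :
    ∑ x, Q x * W x y * log (W x y / outDist W Q y)
      = ∑ x, Q x * W x y * log (W x y) - outDist W Q y * log (outDist W Q y) := by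
  nth_rw 2 [outDist]
  rw [Finset.sum_mul, ← Finset.sum_sub_distrib]
  refine Finset.sum_congr rfl fun x _ => ?_
  rcases (hW x y).eq_or_lt with hx | hx
  · simp [← hx]
  · rw [log_div hx.ne' hy]
    ring

lemma hasDerivAt_gallagerMean_rpow_zero (hQ : ∀ x, 0 ≤ Q x) (hW : ∀ x y, 0 ≤ W x y) (y : Y) :
    HasDerivAt (fun ρ => gallagerMean W ρ Q y ^ (1 + ρ))
      (-∑ x, Q x * W x y * log (W x y / outDist W Q y)) 0 := by
  rcases (outDist_nonneg hQ hW y).eq_or_lt with hy | hy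
  · rw [← hy]
    refine (hasDerivAt_const (0 : ℝ) (0 : ℝ)).congr_of_eventuallyEq ?_ |>.congr_deriv (by simp)
    filter_upwards [lt_mem_nhds (neg_one_lt_zero (R := ℝ))] with ρ hρ
    have hρ' : 1 + ρ ≠ 0 := (neg_lt_iff_pos_add'.1 hρ).ne'
    rw [gallagerMean_eq_zero hQ hW hρ' hy.symm, zero_rpow hρ']
  · refine ((hasDerivAt_gallagerMean_zero hW Q y).rpow ((hasDerivAt_id' (0 : ℝ)).const_add 1)
      (by rwa [gallagerMean_zero])).congr_deriv ?_
    rw [gallagerMean_zero, sum_mul_log_div_outDist hW hy.ne']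
    simp only [add_zero, rpow_one, sub_self, rpow_zero]
    ring

end Derivative

section Exponent

variable {X Y : Type*} [Fintype X] [Fintype Y] {W : X → Y → ℝ} {Q : X → ℝ} {R : ℝ}

lemma IsChannel.isDist (hW : IsChannel W) (x : X) : IsDist (W x) := ⟨hW.1 x, hW.2 x⟩

lemma sum_outDist (hQ : IsDist Q) (hW : IsChannel W) : ∑ y, outDist W Q y = 1 := by
  simp only [outDist]
  rw [Finset.sum_comm]
  simp only [← Finset.mul_sum, hW.2, mul_one, hQ.2]

lemma isDist_outDist (hQ : IsDist Q) (hW : IsChannel W) : IsDist (outDist W Q) :=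
  ⟨outDist_nonneg hQ.1 hW.1, sum_outDist hQ hW⟩

lemma sum_gallagerMean_rpow_pos (hQ : IsDist Q) (hW : IsChannel W) (ρ : ℝ) :
    0 < ∑ y, gallagerMean W ρ Q y ^ (1 + ρ) := by
  obtain ⟨x, hx⟩ := hQ.exists_pos
  obtain ⟨y, hy⟩ := (hW.isDist x).exists_pos
  exact Finset.sum_pos' (fun y _ => rpow_nonneg (gallagerMean_nonneg hQ.1 hW.1 ρ y) _)
    ⟨y, Finset.mem_univ y, rpow_pos_of_pos (gallagerMean_pos hQ.1 hW.1 ρ hx hy) _⟩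

lemma sum_gallagerMean_zero_rpow (hQ : IsDist Q) (hW : IsChannel W) :
    ∑ y, gallagerMean W 0 Q y ^ (1 + (0 : ℝ)) = 1 := by
  simp only [gallagerMean_zero, add_zero, rpow_one, sum_outDist hQ hW]

lemma Eo_zero (hQ : IsDist Q) (hW : IsChannel W) : Eo W 0 Q = 0 :=
  (congrArg (-log ·) (sum_gallagerMean_zero_rpow hQ hW)).trans (by simp)

lemma continuousOn_Eo (hW : IsChannel W) :
    ContinuousOn (fun z : ℝ × (X → ℝ) => Eo W z.1 z.2) (Set.Ioi (-1) ×ˢ {Q | IsDist Q}) := by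
  have hpos : ∀ z ∈ Set.Ioi (-1 : ℝ) ×ˢ {Q : X → ℝ | IsDist Q}, 0 < 1 + z.1 :=
    fun z hz => neg_lt_iff_pos_add'.1 hz.1
  refine (ContinuousOn.log ?_ fun z hz => (sum_gallagerMean_rpow_pos hz.2 hW z.1).ne').neg
  refine continuousOn_finsetSum _ fun y _ => ContinuousOn.rpow ?_ (by fun_prop)
    fun z hz => Or.inr (hpos z hz)
  refine continuousOn_finsetSum _ fun x _ => ContinuousOn.mul (by fun_prop) ?_
  exact continuousOn_const.rpow (continuousOn_const.div (by fun_prop) fun z hz => (hpos z hz).ne')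
    fun z hz => Or.inr (one_div_pos.2 (hpos z hz))

lemma continuousOn_exponent (hW : IsChannel W) (R : ℝ) :
    ContinuousOn (fun z : ℝ × (X → ℝ) => -z.1 * R + Eo W z.1 z.2)
      (Set.Icc 0 1 ×ˢ {Q | IsDist Q}) :=
  ContinuousOn.add (by fun_prop) ((continuousOn_Eo hW).mono
    (Set.prod_mono (fun _ hρ => neg_one_lt_zero.trans_le hρ.1) subset_rfl))

lemma isGreatest_ErQ (hQ : IsDist Q) (hW : IsChannel W) (R : ℝ) :
    IsGreatest ((fun ρ => -ρ * R + Eo W ρ Q) '' Set.Icc (0 : ℝ) 1) (ErQ W R Q) :=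
  (isCompact_Icc.image_of_continuousOn ((continuousOn_exponent hW R).comp
    (f := fun ρ => (ρ, Q)) (by fun_prop) fun _ hρ => ⟨hρ, hQ⟩)).isGreatest_sSup
    ((Set.nonempty_Icc.2 zero_le_one).image _)

lemma le_ErQ (hQ : IsDist Q) (hW : IsChannel W) (R : ℝ) {ρ : ℝ} (hρ : ρ ∈ Set.Icc (0 : ℝ) 1) :
    -ρ * R + Eo W ρ Q ≤ ErQ W R Q :=
  (isGreatest_ErQ hQ hW R).2 ⟨ρ, hρ, rfl⟩

lemma isGreatest_Er [Nonempty X] (hW : IsChannel W) (R : ℝ) :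
    IsGreatest {v : ℝ | ∃ Q : X → ℝ, IsDist Q ∧ v = ErQ W R Q} (Er W R) := by
  obtain ⟨x⟩ := ‹Nonempty X›
  obtain ⟨⟨ρ, Q⟩, ⟨hρ, hQ⟩, hmax⟩ := (isCompact_Icc.prod (isCompact_stdSimplex ℝ X)).exists_isMaxOn
    ⟨(0, Pi.single x 1), by simp, single_mem_stdSimplex ℝ x⟩ (continuousOn_exponent hW R)
  have h : IsGreatest {v : ℝ | ∃ Q : X → ℝ, IsDist Q ∧ v = ErQ W R Q} (ErQ W R Q) := by
    refine ⟨⟨Q, hQ, rfl⟩, ?_⟩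
    rintro _ ⟨Q', hQ', rfl⟩
    obtain ⟨ρ', hρ', h'⟩ := (isGreatest_ErQ hQ' hW R).1
    exact h'.symm.trans_le ((hmax (a := (ρ', Q')) ⟨hρ', hQ'⟩).trans (le_ErQ hQ hW R hρ))
  rwa [Er, h.csSup_eq]

lemma le_Er (hQ : IsDist Q) (hW : IsChannel W) (R : ℝ) {ρ : ℝ} (hρ : ρ ∈ Set.Icc (0 : ℝ) 1) :
    -ρ * R + Eo W ρ Q ≤ Er W R := by
  have : Nonempty X := hQ.exists_pos.nonempty
  exact (le_ErQ hQ hW R hρ).trans ((isGreatest_Er hW R).2 ⟨Q, hQ, rfl⟩)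

lemma Er_nonneg [Nonempty X] (hW : IsChannel W) (R : ℝ) : 0 ≤ Er W R := by
  obtain ⟨Q, hQ, -⟩ := (isGreatest_Er hW R).1
  simpa [Eo_zero hQ hW] using le_Er hQ hW R (Set.left_mem_Icc.2 zero_le_one)

lemma le_Rcr [Nonempty X] (hW : IsChannel W)
    (hR : Er W R = -R + sSup {v : ℝ | ∃ Q : X → ℝ, IsDist Q ∧ v = Eo W 1 Q}) : R ≤ Rcr W := by
  refine le_csSup ⟨sSup {v : ℝ | ∃ Q : X → ℝ, IsDist Q ∧ v = Eo W 1 Q}, fun R' hR' => ?_⟩ hR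
  rw [Set.mem_ofPred_eq] at hR'
  linarith [Er_nonneg hW R']

lemma hasDerivAt_Eo_zero (hQ : IsDist Q) (hW : IsChannel W) :
    HasDerivAt (fun ρ => Eo W ρ Q) (MI W Q) 0 := by
  refine ((HasDerivAt.fun_sum fun y _ => hasDerivAt_gallagerMean_rpow_zero hQ.1 hW.1 y).log
    (sum_gallagerMean_rpow_pos hQ hW 0).ne').neg.congr_deriv ?_
  rw [sum_gallagerMean_zero_rpow hQ hW, div_one, Finset.sum_neg_distrib, neg_neg, MI,
    Finset.sum_comm]
  rfl

lemma Er_pos [Nonempty X] (hW : IsChannel W) (hR : R < Capacity W) : 0 < Er W R := by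
  obtain ⟨Q₀, hQ₀, -⟩ := (isGreatest_Er hW R).1
  have hne : {v : ℝ | ∃ Q : X → ℝ, IsDist Q ∧ v = MI W Q}.Nonempty := ⟨_, Q₀, hQ₀, rfl⟩
  obtain ⟨_, ⟨Q, hQ, rfl⟩, hlt⟩ := exists_lt_of_lt_csSup hne hR
  have hderiv : HasDerivAt (fun ρ => -ρ * R + Eo W ρ Q) (-1 * R + MI W Q) 0 :=
    ((hasDerivAt_neg (0 : ℝ)).mul_const R).add (hasDerivAt_Eo_zero hQ hW)
  have hslope := (hasDerivAt_iff_tendsto_slope.1 hderiv).mono_left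
    (nhdsWithin_mono 0 fun _ hx => ne_of_gt hx : nhdsWithin 0 (Set.Ioi (0 : ℝ)) ≤ nhdsWithin 0 {0}ᶜ)
  obtain ⟨ρ, hpos, hρ⟩ := ((hslope.eventually_const_lt (by linarith : 0 < -1 * R + MI W Q)).and
    (Ioo_mem_nhdsGT zero_lt_one)).exists
  rw [slope_def_field, Eo_zero hQ hW, div_pos_iff_of_pos_right (sub_pos.2 hρ.1)] at hpos
  linarith [le_Er hQ hW R (Set.Ioo_subset_Icc_self hρ)]

lemma exists_mem_Ioo_Er_eq (hW : IsChannel W) (hR₁ : Rcr W < R) (hR₂ : R < Capacity W)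
    (hQ : IsDist Q) (hopt : ErQ W R Q = Er W R) :
    ∃ ρ ∈ Set.Ioo (0 : ℝ) 1, Er W R = -ρ * R + Eo W ρ Q := by
  have : Nonempty X := hQ.exists_pos.nonempty
  obtain ⟨ρ, hρ, hEr⟩ := (isGreatest_ErQ hQ hW R).1
  replace hEr : -ρ * R + Eo W ρ Q = Er W R := hEr.trans hopt
  refine ⟨ρ, ⟨hρ.1.lt_of_ne ?_, hρ.2.lt_of_ne ?_⟩, hEr.symm⟩
  · rintro rfl
    have := Er_pos hW hR₂
    simp [← hEr, Eo_zero hQ hW] at this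
  · rintro rfl
    have hmax : IsGreatest {v : ℝ | ∃ Q : X → ℝ, IsDist Q ∧ v = Eo W 1 Q} (Eo W 1 Q) := by
      refine ⟨⟨Q, hQ, rfl⟩, ?_⟩
      rintro _ ⟨Q', hQ', rfl⟩
      have := le_Er hQ' hW R (Set.right_mem_Icc.2 zero_le_one)
      linarith
    refine hR₁.not_ge (le_Rcr hW ?_)
    rw [hmax.csSup_eq, ← hEr, neg_one_mul]

lemma Eo_eq_of_singular_of_supportMass_eq (hQ : IsDist Q) (hW : IsChannel W) (hs : Singular W Q)
    {c : ℝ} (hc : 0 < c) (hmass : ∀ y, 0 < outDist W Q y → supportMass W Q y = c) {ρ : ℝ}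
    (hρ : 0 < 1 + ρ) : Eo W ρ Q = -(ρ * log c) := by
  have hterm : ∀ y, outDist W Q y * supportMass W Q y ^ ρ = outDist W Q y * c ^ ρ := fun y => by
    rcases (outDist_nonneg hQ.1 hW.1 y).eq_or_lt with hy | hy
    · simp [← hy]
    · rw [hmass y hy]
  rw [Eo_eq_of_singular hQ.1 hW.1 hs hρ]
  simp only [hterm]
  rw [← Finset.sum_mul, sum_outDist hQ hW, one_mul, log_rpow hc]

/-- If the support mass were constant then `Eo W · Q` would be linear, and a linear exponent cannot
be positive and maximal at an interior point. -/
lemma exists_supportMass_lt (hQ : IsDist Q) (hW : IsChannel W) (hs : Singular W Q) {ρ : ℝ}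
    (hρ : ρ ∈ Set.Ioo (0 : ℝ) 1) (hpos : 0 < -ρ * R + Eo W ρ Q)
    (hmax : -1 * R + Eo W 1 Q ≤ -ρ * R + Eo W ρ Q) :
    ∃ y₁ y₂, 0 < outDist W Q y₁ ∧ 0 < outDist W Q y₂ ∧
      supportMass W Q y₂ < supportMass W Q y₁ := by
  by_contra! hcon
  obtain ⟨y₀, hy₀⟩ := (isDist_outDist hQ hW).exists_pos
  have hlin : ∀ s : ℝ, 0 < 1 + s → Eo W s Q = -(s * log (supportMass W Q y₀)) := fun s =>
    Eo_eq_of_singular_of_supportMass_eq hQ hW hs (supportMass_pos hQ.1 hW.1 hy₀)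
      fun y hy => le_antisymm (hcon y y₀ hy hy₀) (hcon y₀ y hy₀ hy)
  rw [hlin 1 (by norm_num), hlin ρ (by linarith [hρ.1])] at hmax
  rw [hlin ρ (by linarith [hρ.1])] at hpos
  nlinarith [hρ.1, hρ.2]

end Exponent

lemma exp_mul_rpow_mul_pow {Z : ℝ} (hZ : 0 < Z) (R ρ : ℝ) (N : ℕ) :
    exp (N * R) ^ ρ * Z ^ N = exp (-(N : ℝ) * (-ρ * R + -log Z)) := by
  rw [← exp_mul, ← exp_log (pow_pos hZ N), ← exp_add, log_pow]
  congr 1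
  ring

theorem statement4_general {X Y : Type*} [Fintype X] [Fintype Y] {W : X → Y → ℝ}
    (hW : IsChannel W) {R : ℝ} (hR₁ : Rcr W < R) (hR₂ : R < Capacity W) {Q : X → ℝ}
    (hQ : IsDist Q) (hopt : ErQ W R Q = Er W R) (hs : Singular W Q) :
    ∃ K : ℝ, 0 < K ∧ ∀ N : ℕ, 0 < N →
      ∃ (f : Fin (nMsgs N R) → Fin N → X) (φ : (Fin N → Y) → Fin (nMsgs N R)),
        Pmax W f φ ≤ K / √N * exp (-(N : ℝ) * Er W R) := by
  have : Nonempty X := hQ.exists_pos.nonempty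
  obtain ⟨ρ, hρ, hEr⟩ := exists_mem_Ioo_Er_eq hW hR₁ hR₂ hQ hopt
  obtain ⟨y₁, y₂, h₁, h₂, hlt⟩ := exists_supportMass_lt hQ hW hs hρ
    (hEr ▸ Er_pos hW hR₂) (hEr ▸ le_Er hQ hW R (Set.right_mem_Icc.2 zero_le_one))
  obtain ⟨K, hK, hbound⟩ := exists_sum_prod_mul_min_one_le (outDist_nonneg hQ.1 hW.1)
    (supportMass_nonneg hQ.1) (fun y => supportMass_pos hQ.1 hW.1) h₁ h₂ hlt hρ
  refine ⟨6 * K, by positivity, fun N hN => ?_⟩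
  obtain ⟨f, φ, hcode⟩ := exists_code_Pmax_le hQ hW.1 (N := N) (Nat.ceil_pos.2 (exp_pos (N * R)))
    (exp_pos _) (Nat.ceil_lt_add_one (exp_pos _).le).le
  refine ⟨f, φ, hcode.trans ?_⟩
  rw [hEr, Eo_eq_of_singular hQ.1 hW.1 hs (by linarith [hρ.1]), ← exp_mul_rpow_mul_pow,
    mul_div_assoc, mul_assoc]
  · exact mul_le_mul_of_nonneg_left (hbound N hN _ (exp_pos _)) (by norm_num)
  · exact Finset.sum_pos' (fun y _ => mul_nonneg (outDist_nonneg hQ.1 hW.1 y)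
      (rpow_nonneg (supportMass_nonneg hQ.1 y) _)) ⟨y₁, Finset.mem_univ _,
        mul_pos h₁ (rpow_pos_of_pos (supportMass_pos hQ.1 hW.1 h₁) _)⟩

/-- If `W` is singular at rate `R ∈ (R_cr, C)`, there is an `(N,R)` code with
maximal error probability at most `K₃ / √N · exp(-N E_r(R))`. -/
theorem statement4 {X Y : Type*} [Fintype X] [Fintype Y] [Nonempty X] [Nonempty Y]
    (W : X → Y → ℝ) (hW : IsChannel W) (hcr : Rcr W < Capacity W)
    (R : ℝ) (hR1 : Rcr W < R) (hR2 : R < Capacity W)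
    (hsingR : ∀ Q : X → ℝ, IsDist Q → ErQ W R Q = Er W R → Singular W Q) :
    ∃ K : ℝ, 0 < K ∧ ∀ N : ℕ, 0 < N →
      ∃ (f : Fin (nMsgs N R) → Fin N → X) (φ : (Fin N → Y) → Fin (nMsgs N R)),
        Pmax W f φ ≤ K / Real.sqrt N * Real.exp (-(N : ℝ) * Er W R) := by
  obtain ⟨Q, hQ, hopt⟩ := (isGreatest_Er hW R).1
  exact statement4_general hW hR1 hR2 hQ hopt.symm (hsingR Q hQ hopt.symm)

end RCB
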